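/- Let σ be a viable and dynamic execution strategy for Γ_Φ. Let s be any scenario, i ∈ {1, …, n}, and let s′ = s[v/p] be obtained from s by changing the value of any variable p ∈ {x_i, y_i, x_{i+1}, y_{i+1}, …, xₙ, yₙ} to any value v ∈ {0,1}. Then [σ(s′)]_{B_i} − [σ(s′)]_{A_i} ≤ i−1 if and only if [σ(s)]_{B_i} − [σ(s)]_{A_i} ≤ i−1. -/

import Mathlib

/-!
Changing the value of a single variable `p` cannot affect any task scheduled no later than the
observation of `p`: at the earliest time where the two schedules differ, `p` is still unobserved
and all earlier observations agree, so the histories coincide and dynamicity forces the tasks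
scheduled at that time to coincide as well (`CSTN.Dynamic.eq_of_le_obs`).

In `Γ_Φ`, the chain `A_i ≤ A_k ≤ X_k - (n + 2) ≤ Y_k - (n + 3)` holds in every scenario whenever
`i ≤ k` (`add_le_obs`). Hence if `B_i ≤ A_i + i` in a scenario (0-based, `i < n`), both `A_i` and
`B_i` precede the observation of `p ∈ {x_k, y_k}`, so they keep their times when `p` is changed.
The converse is the same implication, since restoring the old value of `p` returns `s`.
-/


open Classical

/-- A label over propositional variables `P`: a conjunction of positive or negative
literals over distinct variables, encoded as a partial assignment (`none` means the
variable does not occur in the label). The empty label is `fun _ => none`. -/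
abbrev CLabel (P : Type) := P → Option Bool

/-- The empty label `λ`. -/
def emptyLabel (P : Type) : CLabel P := fun _ => none

/-- A scenario `s` satisfies a label `ℓ` (written `s ⊨ ℓ`). -/
def sats {P : Type} (s : P → Bool) (ℓ : CLabel P) : Prop :=
  ∀ p b, ℓ p = some b → s p = b

/-- A Conditional Simple Temporal Network over tasks `T` and propositional
variables `P`.  A labeled constraint `(X, Y, δ, ℓ)` represents `(Y - X ≤ δ, ℓ)`. -/
structure CSTN (T P : Type) where
  /-- The labeled constraints. -/
  C : Set (T × T × ℝ × CLabel P)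
  Cfin : C.Finite
  /-- The label of each task. -/
  L : T → CLabel P
  /-- The observation tasks. -/
  OT : Set T
  /-- The observation task of each propositional variable. -/
  obs : P → T
  obs_mem : ∀ p, obs p ∈ OT
  obs_inj : Function.Injective obs
  obs_surj : ∀ X ∈ OT, ∃ p, obs p = X
  /-- Restriction WD1. -/
  wd1 : ∀ c ∈ C, ∀ s : P → Bool, sats s c.2.2.2 → sats s (L c.1) ∧ sats s (L c.2.1)

namespace CSTN

variable {T P : Type} (Γ : CSTN T P)

/-- The tasks `𝒯_s` executed in scenario `s` (the tasks of the projection `Γ_s`).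
An execution strategy is encoded as a total function `σ : (P → Bool) → T → ℝ`;
the values `σ s X` for `X ∉ 𝒯_s` are irrelevant. -/
def Tasks (s : P → Bool) : Set T := {X | sats s (Γ.L X)}

/-- The history `Hist(t, s, σ)`: the partial scenario recording the values in `s` of
the propositional variables observed strictly before time `t`. -/
noncomputable def Hist (σ : (P → Bool) → T → ℝ) (t : ℝ) (s : P → Bool) : P → Option Bool :=
  fun p => if Γ.obs p ∈ Γ.Tasks s ∧ σ s (Γ.obs p) < t then some (s p) else none

/-- The execution strategy `σ` is dynamic. -/
def Dynamic (σ : (P → Bool) → T → ℝ) : Prop :=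
  ∀ s s' : P → Bool, ∀ X ∈ Γ.Tasks s,
    Γ.Hist σ (σ s X) s = Γ.Hist σ (σ s X) s' → X ∈ Γ.Tasks s' ∧ σ s' X = σ s X

/-- The execution strategy `σ` is viable: in every scenario `s`, the schedule `σ s`
satisfies all constraints of the projection `Γ_s`. -/
def Viable (σ : (P → Bool) → T → ℝ) : Prop :=
  ∀ s : P → Bool, ∀ c ∈ Γ.C, sats s c.2.2.2 → σ s c.2.1 - σ s c.1 ≤ c.2.2.1

/-- `Γ` is dynamically controllable: it admits a dynamic and viable execution strategy. -/
def DynamicallyControllable : Prop :=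
  ∃ σ : (P → Bool) → T → ℝ, Γ.Dynamic σ ∧ Γ.Viable σ

end CSTN

/-! ### The reduction from Q3SAT: the CSTN `Γ_Φ` -/

/-- A literal of the Q3SAT formula: a variable `x i` (`Sum.inl i`) or `y i`
(`Sum.inr i`) together with its sign (`true` = positive occurrence). -/
abbrev QLit (n : ℕ) := (Fin n ⊕ Fin n) × Bool

/-- A clause `l₁ ∨ l₂ ∨ l₃` of the 3CNF `φ`. -/
abbrev QClause (n : ℕ) := QLit n × QLit n × QLit n

/-- The propositional variables `x i`, `y i`, `c i ⁰`, `c i ¹` of `Γ_Φ` (0-based). -/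
inductive PhiVar (n : ℕ) where
  | x (i : Fin n) | y (i : Fin n) | c0 (i : Fin n) | c1 (i : Fin n)
deriving DecidableEq

/-- The tasks of `Γ_Φ` (0-based: paper's `A_i`, `i = 1, …, n+1`, is `A ⟨i-1⟩`). -/
inductive PhiTask (n : ℕ) where
  | A (i : Fin (n + 1)) | B (i : Fin (n + 1))
  | C0 (i : Fin n) | C1 (i : Fin n) | D (i : Fin n)
  | X (i : Fin n) | Y (i : Fin n)
deriving DecidableEq

/-- The propositional variable on which a literal occurs. -/
def litVar {n : ℕ} (l : QLit n) : PhiVar n :=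
  match l.1 with
  | .inl i => .x i
  | .inr i => .y i

/-- The literals of a clause occur on pairwise distinct variables
(so that `ℓ_j = ¬l₁ ∧ ¬l₂ ∧ ¬l₃` is a well-formed label). -/
def GoodClause {n : ℕ} (c : QClause n) : Prop :=
  litVar c.1 ≠ litVar c.2.1 ∧ litVar c.1 ≠ litVar c.2.2 ∧ litVar c.2.1 ≠ litVar c.2.2

/-- A literal evaluates to true under an assignment. -/
def evalLit {n : ℕ} (s : PhiVar n → Bool) (l : QLit n) : Prop := s (litVar l) = l.2

/-- A clause evaluates to true under an assignment. -/
def evalClause {n : ℕ} (s : PhiVar n → Bool) (c : QClause n) : Prop :=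
  evalLit s c.1 ∨ evalLit s c.2.1 ∨ evalLit s c.2.2

/-- The 3CNF `φ` evaluates to true under an assignment. -/
def evalCNF {n m : ℕ} (cl : Fin m → QClause n) (s : PhiVar n → Bool) : Prop :=
  ∀ j, evalClause s (cl j)

/-- The label consisting of the single literal forcing `p` to `b`. -/
def singleLabel {n : ℕ} (p : PhiVar n) (b : Bool) : CLabel (PhiVar n) :=
  fun q => if q = p then some b else none

/-- The label conjunction of two literals. -/
def pairLabel {n : ℕ} (p : PhiVar n) (bp : Bool) (q : PhiVar n) (bq : Bool) :
    CLabel (PhiVar n) :=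
  fun r => if r = p then some bp else if r = q then some bq else none

/-- The label `ℓ_j := ¬l_{j,1} ∧ ¬l_{j,2} ∧ ¬l_{j,3}`, the negation of the clause. -/
def clauseLabel {n : ℕ} (c : QClause n) : CLabel (PhiVar n) :=
  fun q =>
    if q = litVar c.1 then some (!c.1.2)
    else if q = litVar c.2.1 then some (!c.2.1.2)
    else if q = litVar c.2.2 then some (!c.2.2.2)
    else none

/-- `𝒪(x i) = X i`, `𝒪(y i) = Y i`, `𝒪(c i ⁰) = C i ⁰`, `𝒪(c i ¹) = C i ¹`. -/
def phiObs (n : ℕ) : PhiVar n → PhiTask n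
  | .x i => .X i
  | .y i => .Y i
  | .c0 i => .C0 i
  | .c1 i => .C1 i

abbrev PhiCon (n : ℕ) := PhiTask n × PhiTask n × ℝ × CLabel (PhiVar n)

/-- The seven constraints of the `i`-th gadget (as `(X, Y, δ, ℓ)` meaning `Y - X ≤ δ`):
`(D_i ≤ B_i + 1, c_i⁰ ∧ c_i¹)`, `(D_i ≥ A_i + (n+2), ¬c_i⁰ ∧ ¬c_i¹)`,
`(X_i ≥ A_i + (n+2), λ)`, `(Y_i ≥ X_i + 1, λ)`, `(A_{i+1} ≥ Y_i + 1, λ)`,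
`(B_{i+1} ≤ C_i⁰ + (n+4), ¬x_i)`, `(B_{i+1} ≤ C_i¹ + (n+4), x_i)`. -/
def gadget (n : ℕ) (i : Fin n) : Set (PhiCon n) :=
  {(.B i.castSucc, .D i, 1, pairLabel (.c0 i) true (.c1 i) true),
   (.D i, .A i.castSucc, -((n : ℝ) + 2), pairLabel (.c0 i) false (.c1 i) false),
   (.X i, .A i.castSucc, -((n : ℝ) + 2), emptyLabel _),
   (.Y i, .X i, -1, emptyLabel _),
   (.A i.succ, .Y i, -1, emptyLabel _),
   (.C0 i, .B i.succ, (n : ℝ) + 4, singleLabel (.x i) false),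
   (.C1 i, .B i.succ, (n : ℝ) + 4, singleLabel (.x i) true)}

/-- The constraints of `Γ_Φ`: `(B₁ - A₁ ≤ 0, λ)`, the gadget constraints, and the
clause constraints `(B_{n+1} - A_{n+1} ≥ n+1, ℓ_j)` for `j = 1, …, m`. -/
def PhiC (n m : ℕ) (cl : Fin m → QClause n) : Set (PhiCon n) :=
  insert (.A 0, .B 0, (0 : ℝ), emptyLabel _)
    ((⋃ i : Fin n, gadget n i) ∪
     (⋃ j : Fin m,
       {(.B (Fin.last n), .A (Fin.last n), -((n : ℝ) + 1), clauseLabel (cl j))}))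

/-- The CSTN `Γ_Φ` associated to the Q3SAT formula
`Φ = ∃x₁∀y₁ ⋯ ∃xₙ∀yₙ ⋀_{j=1}^m (l_{j,1} ∨ l_{j,2} ∨ l_{j,3})`. -/
def GammaPhi (n m : ℕ) (cl : Fin m → QClause n) : CSTN (PhiTask n) (PhiVar n) where
  C := PhiC n m cl
  Cfin := by
    apply Set.Finite.insert
    apply Set.Finite.union
    · exact Set.finite_iUnion fun i =>
        (((((((Set.finite_singleton _).insert _).insert _).insert _).insert
          _).insert _).insert _)
    · exact Set.finite_iUnion fun j => Set.finite_singleton _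
  L := fun _ => emptyLabel _
  OT := Set.range (phiObs n)
  obs := phiObs n
  obs_mem := fun p => ⟨p, rfl⟩
  obs_inj := by
    intro p q hpq
    cases p <;> cases q <;> simp_all [phiObs]
  obs_surj := fun _ hX => hX
  wd1 := by
    intro c _ s _
    constructor <;> · intro p b hb; simp [emptyLabel] at hb

instance instFinitePhiTask (n : ℕ) : Finite (PhiTask n) := by
  let f : (Fin (n + 1) ⊕ Fin (n + 1)) ⊕ (Fin n ⊕ Fin n ⊕ Fin n ⊕ Fin n ⊕ Fin n) → PhiTask n :=
    Sum.elim (Sum.elim .A .B) (Sum.elim .C0 (Sum.elim .C1 (Sum.elim .D (Sum.elim .X .Y))))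
  refine Finite.of_surjective f ?_
  rintro (i | i | i | i | i | i | i)
  exacts [⟨.inl (.inl i), rfl⟩, ⟨.inl (.inr i), rfl⟩, ⟨.inr (.inl i), rfl⟩,
    ⟨.inr (.inr (.inl i)), rfl⟩, ⟨.inr (.inr (.inr (.inl i))), rfl⟩,
    ⟨.inr (.inr (.inr (.inr (.inl i)))), rfl⟩, ⟨.inr (.inr (.inr (.inr (.inr i)))), rfl⟩]

/-- For a dynamic strategy of a CSTN in which every task is always executed, two scenarios that
differ at most on `p` schedule identically every task that is not later than `𝒪(p)`. -/
theorem CSTN.Dynamic.eq_of_le_obs {T P : Type} [Finite T] {Γ : CSTN T P}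
    {σ : (P → Bool) → T → ℝ} (hdyn : Γ.Dynamic σ) (hT : ∀ s X, X ∈ Γ.Tasks s)
    {s s' : P → Bool} {p : P} (hs : ∀ q, q ≠ p → s' q = s q)
    {Z : T} (hZ : σ s Z ≤ σ s (Γ.obs p)) : σ s' Z = σ s Z := by
  by_contra hne
  -- `W` is a task realizing the earliest time at which the two schedules differ.
  obtain ⟨W, hW, hmin⟩ := Set.exists_min_image {X | σ s' X ≠ σ s X}
    (fun X => min (σ s X) (σ s' X)) (Set.toFinite _) ⟨Z, hne⟩
  simp only [Set.mem_ofPred_eq] at hW hmin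
  set t := min (σ s W) (σ s' W) with ht
  have htZ : t ≤ σ s Z := (hmin Z hne).trans (min_le_left _ _)
  have hearly : ∀ X, σ s X < t ∨ σ s' X < t → σ s' X = σ s X := by
    intro X hX
    by_contra h
    have := hmin X h
    rw [le_min_iff] at this
    rcases hX with hX | hX <;> linarith
  have hlt : ∀ X, σ s X < t ↔ σ s' X < t := fun X =>
    ⟨fun h => by rwa [hearly X (.inl h)], fun h => by rwa [← hearly X (.inr h)]⟩
  have hist : Γ.Hist σ t s = Γ.Hist σ t s' := by
    funext q
    simp only [CSTN.Hist, hT, true_and, hlt]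
    by_cases hq : q = p
    · subst hq
      have : ¬ σ s' (Γ.obs q) < t := by
        rw [← hlt]
        linarith
      simp [this]
    · rw [hs q hq]
  rcases min_choice (σ s W) (σ s' W) with h | h <;> rw [← ht] at h
  · rw [h] at hist
    exact hW (hdyn s s' W (hT _ _) hist).2
  · rw [h] at hist
    exact hW (hdyn s' s W (hT _ _) hist.symm).2.symm

section

variable {n m : ℕ} {cl : Fin m → QClause n} {σ : (PhiVar n → Bool) → PhiTask n → ℝ}

theorem gadget_bounds (hviable : (GammaPhi n m cl).Viable σ) (s : PhiVar n → Bool) (k : Fin n) :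
    σ s (.A k.castSucc) + (n + 2) ≤ σ s (.X k) ∧ σ s (.X k) + 1 ≤ σ s (.Y k) ∧
      σ s (.Y k) + 1 ≤ σ s (.A k.succ) := by
  have hsat : sats s (emptyLabel (PhiVar n)) := by
    intro p b hb
    simp [emptyLabel] at hb
  have key : ∀ c ∈ gadget n k, sats s c.2.2.2 → σ s c.2.1 - σ s c.1 ≤ c.2.2.1 := fun c hc =>
    hviable s c (Set.mem_insert_of_mem _ (Or.inl (Set.mem_iUnion.2 ⟨k, hc⟩)))
  have h1 := key (.X k, .A k.castSucc, -((n : ℝ) + 2), emptyLabel _) (by simp [gadget]) hsat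
  have h2 := key (.Y k, .X k, -1, emptyLabel _) (by simp [gadget]) hsat
  have h3 := key (.A k.succ, .Y k, -1, emptyLabel _) (by simp [gadget]) hsat
  simp only at h1 h2 h3
  refine ⟨?_, ?_, ?_⟩ <;> linarith

theorem add_le_obs (hviable : (GammaPhi n m cl).Viable σ) (s : PhiVar n → Bool) {i : Fin n}
    {p : PhiVar n} (hp : ∃ k : Fin n, i ≤ k ∧ (p = PhiVar.x k ∨ p = PhiVar.y k)) :
    σ s (.A i.castSucc) + (n + 2) ≤ σ s (phiObs n p) := by
  obtain ⟨k, hik, hp⟩ := hp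
  have hmono : Monotone fun j : Fin (n + 1) => σ s (.A j) := by
    rw [Fin.monotone_iff_le_succ]
    intro j
    obtain ⟨h1, h2, h3⟩ := gadget_bounds hviable s j
    have : (0 : ℝ) ≤ n := n.cast_nonneg
    linarith
  have hA : σ s (.A i.castSucc) ≤ σ s (.A k.castSucc) :=
    hmono (Fin.castSucc_le_castSucc_iff.2 hik)
  obtain ⟨h1, h2, -⟩ := gadget_bounds hviable s k
  rcases hp with rfl | rfl <;> simp only [phiObs] <;> linarith

/-- An early `B_i` stays early when the scenario changes on a single variable that belongs to
gadget `i` or a later one. -/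
theorem activation_of_agree (hviable : (GammaPhi n m cl).Viable σ)
    (hdyn : (GammaPhi n m cl).Dynamic σ) {s s' : PhiVar n → Bool} {i : Fin n} {p : PhiVar n}
    (hp : ∃ k : Fin n, i ≤ k ∧ (p = PhiVar.x k ∨ p = PhiVar.y k))
    (hs : ∀ q, q ≠ p → s' q = s q)
    (h : σ s (.B i.castSucc) - σ s (.A i.castSucc) ≤ (i.val : ℝ)) :
    σ s' (.B i.castSucc) - σ s' (.A i.castSucc) ≤ (i.val : ℝ) := by
  have hT : ∀ s X, X ∈ (GammaPhi n m cl).Tasks s := fun s X p b hb => by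
    simp [GammaPhi, emptyLabel] at hb
  have hobs : σ s (.A i.castSucc) + (n + 2) ≤ σ s ((GammaPhi n m cl).obs p) :=
    add_le_obs hviable s hp
  have hi : (i.val : ℝ) ≤ n := by exact_mod_cast i.isLt.le
  have hi0 : (0 : ℝ) ≤ i.val := Nat.cast_nonneg _
  rw [hdyn.eq_of_le_obs hT hs (Z := .A i.castSucc) (by linarith),
    hdyn.eq_of_le_obs hT hs (Z := .B i.castSucc) (by linarith)]
  exact h

end

/-- **Lemma 5, first part** (the nature can choose future variables).
Let `σ` be viable and dynamic for `Γ_Φ`, `s` a scenario, `i : Fin n` (0-based: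
the paper's gadget index `i ∈ {1, …, n}`, so the paper's bound `i - 1` is `i.val`),
and `s' = s[v/p]` for any `p ∈ {x_i, y_i, …, x_n, y_n}` and `v ∈ {0,1}`. Then
`[σ(s')]_{B_i} - [σ(s')]_{A_i} ≤ i - 1 ↔ [σ(s)]_{B_i} - [σ(s)]_{A_i} ≤ i - 1`. -/
theorem gammaPhi_future_vars_activation (n m : ℕ) (hn : 1 ≤ n) (hm : 1 ≤ m)
    (cl : Fin m → QClause n) (hgood : ∀ j, GoodClause (cl j))
    (σ : (PhiVar n → Bool) → PhiTask n → ℝ)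
    (hviable : (GammaPhi n m cl).Viable σ) (hdyn : (GammaPhi n m cl).Dynamic σ)
    (s : PhiVar n → Bool) (i : Fin n) (p : PhiVar n)
    (hp : ∃ k : Fin n, i ≤ k ∧ (p = PhiVar.x k ∨ p = PhiVar.y k)) (v : Bool) :
    (σ (Function.update s p v) (.B i.castSucc) -
      σ (Function.update s p v) (.A i.castSucc) ≤ (i.val : ℝ)) ↔
    (σ s (.B i.castSucc) - σ s (.A i.castSucc) ≤ (i.val : ℝ)) := by
  have hs : ∀ q, q ≠ p → Function.update s p v q = s q := fun q hq => Function.update_of_ne hq v s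
  exact ⟨activation_of_agree hviable hdyn hp fun q hq => (hs q hq).symm,
    activation_of_agree hviable hdyn hp hs⟩
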